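/- Let g : ℝ^n → ℝ be smooth, and let ρ : ℝ^n → ℝ be a smooth, compactly supported, nonnegative probability density. Fix x ∈ ℝ^n with ρ(x) > 0. For ε > 0 define ḡ_ε(x) = ∫_{ℝ^n} exp(−‖x−y‖²/ε²) g(y) ρ(y) dy, d_ε(x) = ∫_{ℝ^n} exp(−‖x−y‖²/ε²) ρ(y) dy, and g_ε(x) = ḡ_ε(x)/d_ε(x). Then lim_{ε → 0⁺} (g_ε(x) − g(x))/ε² = (1/4) ( Δg(x) + 2 ⟨∇g(x), ∇ρ(x)⟩ / ρ(x) ), where Δ denotes the Euclidean Laplacian (sum of second partial derivatives) and ∇ the Euclidean gradient. -/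

import Mathlib

/-!
Put `h y = (g y - g x) * ρ y`, a smooth compactly supported function vanishing at `x`. Then
`g_ε x - g x = (∫ G_ε (x - y) h y) / (∫ G_ε (x - y) ρ y)`, and the substitution `y = x + ε z`
(`gaussian_integral_rescale`) turns both integrals into `ε ^ n` times integrals against the fixed
weight `exp (-‖z‖ ^ 2)`, so the powers `ε ^ n` cancel.

The denominator tends to `ρ x * ∫ exp (-‖z‖ ^ 2)` by dominated convergence. In the numerator the
linear Taylor term of `h` at `x` integrates to zero by oddness, and the remainder divided by `ε ^ 2`
is dominated by `C ‖z‖ ^ 2` (the derivative of `h` is Lipschitz) and tends to `D²h(x)(z, z) / 2`.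
Gaussian integration by parts (`integral_quadratic_gaussian`) gives
`∫ D²h(x)(z, z) exp (-‖z‖ ^ 2) = Δh(x) / 2 * ∫ exp (-‖z‖ ^ 2)`. The product rule at `x`, where
`h` vanishes, gives `Δh(x) = ρ(x) Δg(x) + 2 ⟪∇g(x), ∇ρ(x)⟫`.
-/

open MeasureTheory Filter Set
open scoped RealInnerProductSpace

/-- The Euclidean Laplacian (sum of second partial derivatives) of a function
`f : ℝⁿ → ℝ` at a point `x`. -/
noncomputable def euclideanLaplacian {n : ℕ} (f : EuclideanSpace ℝ (Fin n) → ℝ)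
    (x : EuclideanSpace ℝ (Fin n)) : ℝ :=
  ∑ i : Fin n,
    fderiv ℝ (fun y => fderiv ℝ f y (EuclideanSpace.single i 1)) x
      (EuclideanSpace.single i 1)

/-! ### Second-order Taylor estimates -/

section Taylor

variable {E : Type*} [NormedAddCommGroup E] [NormedSpace ℝ E]

/-- Second-order Taylor expansion along a ray, as a limit. -/
lemma tendsto_taylor_two {f : E → ℝ} (hf : ContDiff ℝ 2 f) (x z : E) :
    Tendsto (fun ε : ℝ => (f (x + ε • z) - f x - fderiv ℝ f x (ε • z)) / ε ^ 2)
      (nhdsWithin 0 (Ioi 0)) (nhds (fderiv ℝ (fderiv ℝ f) x z z / 2)) := by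
  have hline : ∀ t : ℝ, HasDerivAt (fun t : ℝ => x + t • z) z t := fun t => by
    simpa using ((hasDerivAt_id t).smul_const z).const_add x
  have hdf : Differentiable ℝ f := hf.differentiable (by norm_num)
  have hddf : Differentiable ℝ (fderiv ℝ f) :=
    (hf.fderiv_right (m := 1) (by norm_num)).differentiable (by norm_num)
  have hcont : Continuous fun ε : ℝ => f (x + ε • z) - f x - fderiv ℝ f x (ε • z) := by
    have := hf.continuous
    fun_prop
  refine HasDerivAt.lhopital_zero_nhdsGT
    (f' := fun t => fderiv ℝ f (x + t • z) z - fderiv ℝ f x z) (g' := fun t => 2 * t)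
    (Eventually.of_forall fun t => ?_) (Eventually.of_forall fun t => ?_) ?_ ?_ ?_ ?_
  · have h1 := (hdf (x + t • z)).hasFDerivAt.comp_hasDerivAt t (hline t)
    have h2 : HasDerivAt (fun t : ℝ => fderiv ℝ f x (t • z)) (fderiv ℝ f x z) t := by
      simpa using (hasDerivAt_id t).mul_const (fderiv ℝ f x z)
    exact (h1.sub_const (f x)).sub h2
  · simpa using hasDerivAt_pow 2 t
  · filter_upwards [self_mem_nhdsWithin] with t ht
    have : (0 : ℝ) < t := ht
    positivity
  · have := hcont.tendsto 0
    simp only [zero_smul, add_zero, sub_self, map_zero] at this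
    exact this.mono_left nhdsWithin_le_nhds
  · have := (continuous_pow (M := ℝ) 2).tendsto 0
    simp only [ne_eq, OfNat.ofNat_ne_zero, not_false_eq_true, zero_pow] at this
    exact this.mono_left nhdsWithin_le_nhds
  · have h1 : HasDerivAt (fun t : ℝ => fderiv ℝ f (x + t • z) z)
        (fderiv ℝ (fderiv ℝ f) x z z) 0 := by
      have hx : HasFDerivAt (fderiv ℝ f) (fderiv ℝ (fderiv ℝ f) x) (x + (0 : ℝ) • z) := by
        simpa using (hddf x).hasFDerivAt
      have := hx.comp_hasDerivAt (0 : ℝ) (hline 0)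
      simpa using this.clm_apply (hasDerivAt_const (0 : ℝ) z)
    have h2 := h1.tendsto_slope_zero_right.div_const 2
    refine h2.congr fun t => ?_
    simp only [zero_add, zero_smul, add_zero, smul_eq_mul]
    rw [inv_mul_eq_div, div_div, mul_comm]

/-- Uniform quadratic bound for the first-order Taylor remainder. -/
lemma exists_taylor_remainder_bound {f : E → ℝ} (hf : ContDiff ℝ 2 f) (hs : HasCompactSupport f)
    (x : E) : ∃ C : ℝ, 0 ≤ C ∧ ∀ v, ‖f (x + v) - f x - fderiv ℝ f x v‖ ≤ C * ‖v‖ ^ 2 := by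
  obtain ⟨C, hC⟩ := ContDiff.lipschitzWith_of_hasCompactSupport (hs.fderiv ℝ)
    (hf.fderiv_right (m := 1) (by norm_num)) (by norm_num)
  refine ⟨C, C.2, fun v => ?_⟩
  have h := (convex_closedBall x ‖v‖).norm_image_sub_le_of_norm_fderiv_le' (𝕜 := ℝ) (f := f)
    (φ := fderiv ℝ f x) (C := C * ‖v‖) (x := x) (y := x + v)
    (fun y _ => hf.differentiable (by norm_num) y)
    (fun y hy => (hC.norm_sub_le y x).trans (by
      gcongr
      simpa [dist_eq_norm] using hy))
    (by simp) (by simp)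
  rw [add_sub_cancel_left] at h
  calc _ ≤ _ := h
    _ = _ := by ring

end Taylor

/-! ### Gaussian integrals -/

section Gaussian

variable {E : Type*} [NormedAddCommGroup E] [InnerProductSpace ℝ E] [FiniteDimensional ℝ E]
  [MeasurableSpace E] [BorelSpace E]

lemma integrable_exp_neg_mul_sq_norm {b : ℝ} (hb : 0 < b) :
    Integrable (fun z : E => Real.exp (-b * ‖z‖ ^ 2)) := by
  apply Integrable.of_integral_ne_zero
  rw [GaussianFourier.integral_rexp_neg_mul_sq_norm hb]
  positivity

lemma integrable_exp_neg_sq_norm : Integrable (fun z : E => Real.exp (-‖z‖ ^ 2)) := by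
  simpa using integrable_exp_neg_mul_sq_norm (E := E) one_pos

/-- A continuous function of at most quadratic growth is integrable against the Gaussian weight. -/
lemma integrable_mul_gaussian {F : E → ℝ} (hF : Continuous F) {C : ℝ}
    (hC : ∀ z, ‖F z‖ ≤ C * (1 + ‖z‖ ^ 2)) :
    Integrable (fun z => F z * Real.exp (-‖z‖ ^ 2)) := by
  refine Integrable.mono' ((integrable_exp_neg_mul_sq_norm (E := E)
    (b := 1 / 2) (by norm_num)).const_mul (2 * C))
    (by fun_prop) (Eventually.of_forall fun z => ?_)
  have hC0 : 0 ≤ C := by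
    have h0 := (norm_nonneg _).trans (hC 0)
    simpa using h0
  -- `1 + t ≤ 2 (1 + t / 2) ≤ 2 exp (t / 2)` with `t = ‖z‖ ^ 2` absorbs the polynomial factor
  have h1 : 1 + ‖z‖ ^ 2 ≤ 2 * Real.exp (1 / 2 * ‖z‖ ^ 2) := by
    have := Real.add_one_le_exp (1 / 2 * ‖z‖ ^ 2)
    linarith
  have h2 : Real.exp (1 / 2 * ‖z‖ ^ 2) * Real.exp (-‖z‖ ^ 2)
      = Real.exp (-(1 / 2) * ‖z‖ ^ 2) := by
    rw [← Real.exp_add]; congr 1; ring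
  rw [norm_mul, Real.norm_of_nonneg (Real.exp_pos _).le]
  calc ‖F z‖ * Real.exp (-‖z‖ ^ 2)
      ≤ (C * (2 * Real.exp (1 / 2 * ‖z‖ ^ 2))) * Real.exp (-‖z‖ ^ 2) := by
        gcongr
        exact (hC z).trans (by gcongr)
    _ = 2 * C * Real.exp (-(1 / 2) * ‖z‖ ^ 2) := by rw [← h2]; ring

lemma integral_linear_gaussian (L : E →L[ℝ] ℝ) :
    ∫ z, L z * Real.exp (-‖z‖ ^ 2) = 0 := by
  have h := integral_neg_eq_self (fun z : E => L z * Real.exp (-‖z‖ ^ 2)) volume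
  simp only [map_neg, norm_neg, neg_mul, integral_neg] at h
  linarith

lemma integrable_linear_gaussian (L : E →L[ℝ] ℝ) :
    Integrable (fun z => L z * Real.exp (-‖z‖ ^ 2)) := by
  refine integrable_mul_gaussian L.continuous (C := ‖L‖) fun z => (L.le_opNorm z).trans ?_
  gcongr
  nlinarith [sq_nonneg (‖z‖ - 1)]

lemma integrable_bilinear_gaussian (L M : E →L[ℝ] ℝ) :
    Integrable (fun z => L z * M z * Real.exp (-‖z‖ ^ 2)) := by
  refine integrable_mul_gaussian (by fun_prop) (C := ‖L‖ * ‖M‖) fun z => ?_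
  calc ‖L z * M z‖ ≤ (‖L‖ * ‖z‖) * (‖M‖ * ‖z‖) := by
        rw [norm_mul]; gcongr <;> exact ContinuousLinearMap.le_opNorm _ _
    _ = ‖L‖ * ‖M‖ * ‖z‖ ^ 2 := by ring
    _ ≤ _ := by gcongr; linarith

/-- Gaussian integration by parts for a linear function `L`. -/
lemma integral_linear_mul_inner_gaussian (L : E →L[ℝ] ℝ) (e : E) :
    ∫ z, L z * ⟪e, z⟫ * Real.exp (-‖z‖ ^ 2) = L e / 2 * ∫ z : E, Real.exp (-‖z‖ ^ 2) := by
  have hd : ∀ z : E, HasFDerivAt (fun z : E => Real.exp (-‖z‖ ^ 2))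
      (Real.exp (-‖z‖ ^ 2) • (-((2 : ℕ) • innerSL ℝ z) : E →L[ℝ] ℝ)) z := fun z =>
    ((hasStrictFDerivAt_norm_sq z).hasFDerivAt.neg).exp
  have hde : ∀ z : E, fderiv ℝ (fun z : E => Real.exp (-‖z‖ ^ 2)) z e
      = -2 * (⟪e, z⟫ * Real.exp (-‖z‖ ^ 2)) := fun z => by
    rw [(hd z).fderiv]
    simp [real_inner_comm e z]
    ring
  have hLe : ∀ z : E, fderiv ℝ (fun z => L z) z e = L e := fun z => by
    rw [L.hasFDerivAt.fderiv]
  have key := integral_mul_fderiv_eq_neg_fderiv_mul_of_integrable (μ := (volume : Measure E))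
    (f := fun z => L z) (g := fun z : E => Real.exp (-‖z‖ ^ 2)) (v := e)
    (by simp only [hLe]; exact integrable_exp_neg_sq_norm.const_mul _)
    (by
      simp only [hde]
      refine ((integrable_bilinear_gaussian L (innerSL ℝ e)).const_mul (-2)).congr
        (Eventually.of_forall fun z => ?_)
      simp only [innerSL_apply_apply]
      ring)
    (integrable_linear_gaussian L)
    (fun z _ => L.differentiableAt) (fun z _ => (hd z).differentiableAt)
  simp only [hde, hLe, integral_const_mul] at key
  have h2 : ∀ z, L z * (-2 * (⟪e, z⟫ * Real.exp (-‖z‖ ^ 2)))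
      = -2 * (L z * ⟪e, z⟫ * Real.exp (-‖z‖ ^ 2)) := fun z => by ring
  simp only [h2, integral_const_mul] at key
  linarith

lemma gaussian_integral_rescale (f : E → ℝ) (x : E) {ε : ℝ} (hε : 0 < ε) :
    ∫ y, Real.exp (-‖x - y‖ ^ 2 / ε ^ 2) * f y
      = ε ^ Module.finrank ℝ E * ∫ z, f (x + ε • z) * Real.exp (-‖z‖ ^ 2) := by
  have h1 := Measure.integral_comp_smul (volume : Measure E)
    (fun w => f (x + w) * Real.exp (-‖w‖ ^ 2 / ε ^ 2)) ε
  have h2 := integral_add_left_eq_self (μ := (volume : Measure E))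
    (fun y => Real.exp (-‖x - y‖ ^ 2 / ε ^ 2) * f y) x
  have h3 : ∀ z : E, -‖ε • z‖ ^ 2 / ε ^ 2 = -‖z‖ ^ 2 := fun z => by
    rw [norm_smul, Real.norm_of_nonneg hε.le]; field_simp
  simp only [h3] at h1
  rw [h1, ← h2, abs_of_pos (by positivity), smul_eq_mul, ← mul_assoc,
    mul_inv_cancel₀ (by positivity), one_mul]
  refine integral_congr_ae (Eventually.of_forall fun z => ?_)
  simp [mul_comm]

/-- The zeroth-order limit, used for the denominator. -/
lemma tendsto_gaussian_average {f : E → ℝ} (hf : Continuous f) (hs : HasCompactSupport f) (x : E) :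
    Tendsto (fun ε : ℝ => ∫ z, f (x + ε • z) * Real.exp (-‖z‖ ^ 2)) (nhdsWithin 0 (Ioi 0))
      (nhds (f x * ∫ z : E, Real.exp (-‖z‖ ^ 2))) := by
  obtain ⟨C, hC⟩ := hs.exists_bound_of_continuous hf
  rw [← integral_const_mul]
  refine tendsto_integral_filter_of_dominated_convergence (fun z => C * Real.exp (-‖z‖ ^ 2))
    (Eventually.of_forall fun ε => by fun_prop)
    (Eventually.of_forall fun ε => Eventually.of_forall fun z => ?_)
    (integrable_exp_neg_sq_norm.const_mul C) (Eventually.of_forall fun z => ?_)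
  · rw [norm_mul, Real.norm_of_nonneg (Real.exp_pos _).le]
    gcongr
    exact hC _
  · have hc : Continuous fun ε : ℝ => f (x + ε • z) * Real.exp (-‖z‖ ^ 2) := by fun_prop
    have := hc.tendsto 0
    simp only [zero_smul, add_zero] at this
    exact this.mono_left nhdsWithin_le_nhds

/-- The second-order limit for a function vanishing at `x`, used for the numerator. -/
lemma tendsto_gaussian_second_order {f : E → ℝ} (hf : ContDiff ℝ 2 f) (hs : HasCompactSupport f)
    {x : E} (hfx : f x = 0) :
    Tendsto (fun ε : ℝ => (∫ z, f (x + ε • z) * Real.exp (-‖z‖ ^ 2)) / ε ^ 2)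
      (nhdsWithin 0 (Ioi 0))
      (nhds (∫ z, fderiv ℝ (fderiv ℝ f) x z z / 2 * Real.exp (-‖z‖ ^ 2))) := by
  obtain ⟨C, hC0, hC⟩ := exists_taylor_remainder_bound hf hs x
  obtain ⟨M, hM⟩ := hs.exists_bound_of_continuous hf.continuous
  have hfc := hf.continuous
  have hlim : Tendsto (fun ε : ℝ => ∫ z,
      (f (x + ε • z) - f x - fderiv ℝ f x (ε • z)) / ε ^ 2 * Real.exp (-‖z‖ ^ 2))
      (nhdsWithin 0 (Ioi 0))
      (nhds (∫ z, fderiv ℝ (fderiv ℝ f) x z z / 2 * Real.exp (-‖z‖ ^ 2))) := by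
    refine tendsto_integral_filter_of_dominated_convergence
      (fun z => (C * ‖z‖ ^ 2) * Real.exp (-‖z‖ ^ 2))
      (Eventually.of_forall fun ε => Continuous.aestronglyMeasurable (by fun_prop)) ?_ ?_
      (Eventually.of_forall fun z => (tendsto_taylor_two hf x z).mul_const _)
    · filter_upwards [self_mem_nhdsWithin] with ε hε
      have hε : 0 < ε := hε
      refine Eventually.of_forall fun z => ?_
      rw [norm_mul, Real.norm_of_nonneg (Real.exp_pos _).le, norm_div,
        Real.norm_of_nonneg (by positivity : 0 ≤ ε ^ 2)]
      gcongr
      rw [div_le_iff₀ (by positivity)]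
      refine (hC (ε • z)).trans_eq ?_
      rw [norm_smul, Real.norm_of_nonneg hε.le]
      ring
    · refine integrable_mul_gaussian (by fun_prop) (C := C) fun z => ?_
      rw [Real.norm_of_nonneg (by positivity)]
      gcongr
      linarith
  refine hlim.congr' ?_
  filter_upwards [self_mem_nhdsWithin] with ε hε
  have hε : 0 < ε := hε
  have hint : Integrable (fun z => f (x + ε • z) * Real.exp (-‖z‖ ^ 2)) := by
    refine integrable_mul_gaussian (by fun_prop) (C := M) fun z => (hM _).trans ?_
    have : 0 ≤ M := (norm_nonneg _).trans (hM 0)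
    nlinarith [sq_nonneg ‖z‖]
  have hsplit : ∀ z, (f (x + ε • z) - f x - fderiv ℝ f x (ε • z)) / ε ^ 2 * Real.exp (-‖z‖ ^ 2)
      = (ε ^ 2)⁻¹ * (f (x + ε • z) * Real.exp (-‖z‖ ^ 2))
        - ε⁻¹ * (fderiv ℝ f x z * Real.exp (-‖z‖ ^ 2)) := fun z => by
    rw [hfx, map_smul, smul_eq_mul]
    field_simp
    ring
  simp only [hsplit]
  rw [integral_sub (hint.const_mul _) ((integrable_linear_gaussian _).const_mul _),
    integral_const_mul, integral_const_mul, integral_linear_gaussian, mul_zero, sub_zero,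
    inv_mul_eq_div]

end Gaussian

/-! ### Coordinates: trace and Laplacian -/

/-- The normalized Gaussian average of a quadratic form is half its trace; here for the form
`z ↦ B z z / 2`, with the normalizing integral on the right-hand side. -/
lemma integral_quadratic_gaussian {n : ℕ}
    (B : EuclideanSpace ℝ (Fin n) →L[ℝ] EuclideanSpace ℝ (Fin n) →L[ℝ] ℝ) :
    ∫ z, B z z / 2 * Real.exp (-‖z‖ ^ 2)
      = (1 / 4) * (∑ i, B (EuclideanSpace.single i 1) (EuclideanSpace.single i 1))
        * ∫ z : EuclideanSpace ℝ (Fin n), Real.exp (-‖z‖ ^ 2) := by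
  have hB : ∀ z, B z z / 2 * Real.exp (-‖z‖ ^ 2)
      = ∑ i, (1 / 2) * (B.flip (EuclideanSpace.single i 1) z * ⟪EuclideanSpace.single i (1 : ℝ), z⟫
        * Real.exp (-‖z‖ ^ 2)) := fun z => by
    have hz : B z z = ∑ i, z i * B z (EuclideanSpace.single i 1) := by
      have h := congrArg (B z) ((EuclideanSpace.basisFun (Fin n) ℝ).sum_repr z)
      rw [← h]
      simp
    rw [hz, Finset.sum_div, Finset.sum_mul]
    refine Finset.sum_congr rfl fun i _ => ?_
    simp [EuclideanSpace.inner_single_left]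
    ring
  simp only [hB]
  rw [integral_finsetSum]
  · simp only [integral_const_mul, integral_linear_mul_inner_gaussian]
    simp only [ContinuousLinearMap.flip_apply]
    rw [Finset.mul_sum, Finset.sum_mul]
    exact Finset.sum_congr rfl fun i _ => by ring
  · exact fun i _ => (integrable_bilinear_gaussian _ (innerSL ℝ _)).const_mul _

/-- Product rule for the Laplacian of `(g - g x) * ρ` at the point `x`, where the first factor
vanishes. -/
lemma laplacian_centered_mul {n : ℕ} {g ρ : EuclideanSpace ℝ (Fin n) → ℝ}
    (hg : ContDiff ℝ 2 g) (hρ : ContDiff ℝ 2 ρ) (x : EuclideanSpace ℝ (Fin n)) :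
    euclideanLaplacian (fun y => (g y - g x) * ρ y) x
      = ρ x * euclideanLaplacian g x + 2 * ⟪gradient g x, gradient ρ x⟫ := by
  have hdg : Differentiable ℝ g := hg.differentiable (by norm_num)
  have hdρ : Differentiable ℝ ρ := hρ.differentiable (by norm_num)
  have hddg : Differentiable ℝ (fderiv ℝ g) :=
    (hg.fderiv_right (m := 1) (by norm_num)).differentiable (by norm_num)
  have hddρ : Differentiable ℝ (fderiv ℝ ρ) :=
    (hρ.fderiv_right (m := 1) (by norm_num)).differentiable (by norm_num)
  have hfirst : ∀ y e, fderiv ℝ (fun y => (g y - g x) * ρ y) y e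
      = (g y - g x) * fderiv ℝ ρ y e + ρ y * fderiv ℝ g y e := fun y e => by
    have h : HasFDerivAt (fun y => (g y - g x) * ρ y) _ y :=
      ((hdg y).hasFDerivAt.sub_const (g x)).mul (hdρ y).hasFDerivAt
    rw [h.fderiv]
    simp
  have hinner : ⟪gradient g x, gradient ρ x⟫ = ∑ i, fderiv ℝ g x (EuclideanSpace.single i 1)
      * fderiv ℝ ρ x (EuclideanSpace.single i 1) := by
    rw [← (EuclideanSpace.basisFun (Fin n) ℝ).sum_inner_mul_inner]
    refine Finset.sum_congr rfl fun i _ => ?_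
    rw [EuclideanSpace.basisFun_apply, inner_gradient_left, real_inner_comm, inner_gradient_left]
  unfold euclideanLaplacian
  rw [hinner, Finset.mul_sum, Finset.mul_sum, ← Finset.sum_add_distrib]
  refine Finset.sum_congr rfl fun i _ => ?_
  simp only [hfirst]
  set e : EuclideanSpace ℝ (Fin n) := EuclideanSpace.single i 1
  have hge : HasFDerivAt (fun y => fderiv ℝ g y e) _ x :=
    (show DifferentiableAt ℝ (fun y => fderiv ℝ g y e) x by fun_prop).hasFDerivAt
  have hρe : HasFDerivAt (fun y => fderiv ℝ ρ y e) _ x :=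
    (show DifferentiableAt ℝ (fun y => fderiv ℝ ρ y e) x by fun_prop).hasFDerivAt
  have h : HasFDerivAt (fun y => (g y - g x) * fderiv ℝ ρ y e + ρ y * fderiv ℝ g y e) _ x :=
    (((hdg x).hasFDerivAt.sub_const (g x)).mul hρe).add ((hdρ x).hasFDerivAt.mul hge)
  rw [h.fderiv]
  simp
  ring

/-- Infinitesimal (drift–diffusion) expansion of the normalized Gaussian
approximation in the flat setting: for smooth `g` and smooth compactly supported
probability density `ρ` with `ρ x > 0`,
`(g_ε(x) − g(x))/ε² → (1/4) (Δg(x) + 2 ⟨∇g(x), ∇ρ(x)⟩ / ρ(x))` as `ε → 0⁺`. -/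
theorem gaussian_normalized_approx_expansion
    {n : ℕ} (g ρ : EuclideanSpace ℝ (Fin n) → ℝ)
    (hg_smooth : ContDiff ℝ (⊤ : ℕ∞) g)
    (hρ_smooth : ContDiff ℝ (⊤ : ℕ∞) ρ) (hρ_supp : HasCompactSupport ρ)
    (hρ_nonneg : ∀ y, 0 ≤ ρ y) (hρ_mass : ∫ y, ρ y = 1)
    (x : EuclideanSpace ℝ (Fin n)) (hx : 0 < ρ x) :
    Tendsto
      (fun ε : ℝ =>
        ((∫ y, Real.exp (-‖x - y‖ ^ 2 / ε ^ 2) * g y * ρ y) /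
            (∫ y, Real.exp (-‖x - y‖ ^ 2 / ε ^ 2) * ρ y) - g x) / ε ^ 2)
      (nhdsWithin 0 (Ioi 0))
      (nhds ((1 / 4) *
        (euclideanLaplacian g x + 2 * ⟪gradient g x, gradient ρ x⟫ / ρ x))) := by
  have hg2 : ContDiff ℝ 2 g := by exact_mod_cast contDiff_infty.1 hg_smooth 2
  have hρ2 : ContDiff ℝ 2 ρ := by exact_mod_cast contDiff_infty.1 hρ_smooth 2
  have hgc := hg2.continuous
  have hρc := hρ2.continuous
  set S : ℝ := ∫ z : EuclideanSpace ℝ (Fin n), Real.exp (-‖z‖ ^ 2) with hS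
  have hSpos : 0 < S := integral_exp_pos integrable_exp_neg_sq_norm
  have hh : ContDiff ℝ 2 (fun y => (g y - g x) * ρ y) := (hg2.sub contDiff_const).mul hρ2
  have hhs : HasCompactSupport (fun y => (g y - g x) * ρ y) := hρ_supp.mul_left
  have hnum := tendsto_gaussian_second_order hh hhs (x := x) (by simp)
  rw [integral_quadratic_gaussian, ← hS] at hnum
  have hlap : (∑ i, fderiv ℝ (fderiv ℝ (fun y => (g y - g x) * ρ y)) x
      (EuclideanSpace.single i 1) (EuclideanSpace.single i 1))
      = euclideanLaplacian (fun y => (g y - g x) * ρ y) x := by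
    have hd := (hh.fderiv_right (m := 1) (by norm_num)).differentiable (by norm_num) x
    refine Finset.sum_congr rfl fun i _ => ?_
    rw [fderiv_clm_apply hd (differentiableAt_const _)]
    simp
  rw [hlap, laplacian_centered_mul hg2 hρ2] at hnum
  have hden := tendsto_gaussian_average hρc hρ_supp x
  have hquot := hnum.div hden (by positivity)
  have hval : (1 / 4) * (ρ x * euclideanLaplacian g x + 2 * ⟪gradient g x, gradient ρ x⟫) * S
      / (ρ x * S)
      = (1 / 4) * (euclideanLaplacian g x + 2 * ⟪gradient g x, gradient ρ x⟫ / ρ x) := by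
    field_simp
  rw [hval] at hquot
  refine hquot.congr' ?_
  filter_upwards [self_mem_nhdsWithin, hden.eventually_ne (by positivity)] with ε hε hne
  have hε : 0 < ε := hε
  have hdiff : (∫ y, Real.exp (-‖x - y‖ ^ 2 / ε ^ 2) * ((g y - g x) * ρ y))
      = (∫ y, Real.exp (-‖x - y‖ ^ 2 / ε ^ 2) * g y * ρ y)
        - g x * ∫ y, Real.exp (-‖x - y‖ ^ 2 / ε ^ 2) * ρ y := by
    rw [← integral_const_mul, ← integral_sub]
    · exact integral_congr_ae (Eventually.of_forall fun y => by ring)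
    · exact Continuous.integrable_of_hasCompactSupport (by fun_prop) hρ_supp.mul_left
    · exact (Continuous.integrable_of_hasCompactSupport (by fun_prop)
        hρ_supp.mul_left).const_mul _
  have hnum' := gaussian_integral_rescale (fun y => (g y - g x) * ρ y) x hε
  have hden' := gaussian_integral_rescale ρ x hε
  rw [hdiff] at hnum'
  have hp : ε ^ Module.finrank ℝ (EuclideanSpace ℝ (Fin n)) ≠ 0 := by positivity
  have hD : (∫ y, Real.exp (-‖x - y‖ ^ 2 / ε ^ 2) * ρ y) ≠ 0 := by
    rw [hden']
    exact mul_ne_zero hp hne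
  rw [div_sub' hD, mul_comm _ (g x), hnum', hden', mul_div_mul_left _ _ hp]
  simp only [Pi.div_apply]
  rw [div_right_comm]
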